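/- Let α be a type and let R, Ri be binary relations on α (R is 'generic rewriting', Ri is 'innermost rewriting') such that Ri is contained in R and the following local commutation property holds: whenever R G H and Ri G J with H ≠ J, either R J H, or there exists K with Ri H K and R J K. Then for all n, m and all G, H, J, if G R^n H and G Ri^m J, there exist K and natural numbers k, l such that H Ri^k K, J R^l K, and n + k ≤ m + l. -/

import Mathlib

/-- `NSteps R n x y` : there is a chain `x = f 0, f 1, …, f n = y` with
`R (f i) (f (i+1))` for each `i < n`, i.e. an `n`-step `R`-reduction sequence. -/
def NSteps {α : Type*} (R : α → α → Prop) (n : ℕ) (x y : α) : Prop :=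
  ∃ f : ℕ → α, f 0 = x ∧ f n = y ∧ ∀ i < n, R (f i) (f (i + 1))

namespace NSteps

variable {α : Type*} {R : α → α → Prop}

theorem refl (x : α) : NSteps R 0 x x :=
  ⟨fun _ => x, rfl, rfl, fun i hi => absurd hi (Nat.not_lt_zero i)⟩

theorem eq_of_zero {x y : α} (h : NSteps R 0 x y) : x = y := by
  obtain ⟨f, hx, hy, -⟩ := h
  exact hx.symm.trans hy

theorem head {n : ℕ} {x y z : α} (hxy : R x y) (hyz : NSteps R n y z) :
    NSteps R (n + 1) x z := by
  obtain ⟨f, rfl, rfl, hf⟩ := hyz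
  refine ⟨fun i => Nat.casesOn i x f, rfl, rfl, fun i hi => ?_⟩
  cases i with
  | zero => exact hxy
  | succ i => exact hf i (Nat.lt_of_succ_lt_succ hi)

theorem exists_head {n : ℕ} {x z : α} (h : NSteps R (n + 1) x z) :
    ∃ y, R x y ∧ NSteps R n y z := by
  obtain ⟨f, rfl, rfl, hf⟩ := h
  exact ⟨f 1, hf 0 n.succ_pos, fun i => f (i + 1), rfl, rfl,
    fun i hi => hf (i + 1) (Nat.succ_lt_succ hi)⟩

theorem trans {m n : ℕ} {x y z : α} (hxy : NSteps R m x y) (hyz : NSteps R n y z) :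
    NSteps R (m + n) x z := by
  induction m generalizing x with
  | zero =>
    obtain rfl := hxy.eq_of_zero
    rwa [Nat.zero_add]
  | succ m ih =>
    obtain ⟨w, hxw, hwy⟩ := hxy.exists_head
    rw [Nat.succ_add]
    exact head hxw (ih hwy)

/-- Local commutation lifts to a single `Ri`-step against an `R`-reduction sequence. -/
theorem strip {Ri : α → α → Prop}
    (hcomm : ∀ G H J, R G H → Ri G J → H ≠ J → R J H ∨ ∃ K, Ri H K ∧ R J K)
    {n : ℕ} {G H J : α} (hH : NSteps R n G H) (hJ : Ri G J) :
    ∃ (K : α) (k l : ℕ), NSteps Ri k H K ∧ NSteps R l J K ∧ n + k ≤ 1 + l := by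
  induction n generalizing G J with
  | zero =>
    obtain rfl := hH.eq_of_zero
    exact ⟨J, 1, 0, head hJ (refl J), refl J, by omega⟩
  | succ n ih =>
    obtain ⟨G', hG', hH'⟩ := hH.exists_head
    by_cases hne : G' = J
    · subst hne
      exact ⟨H, 0, n, refl H, hH', by omega⟩
    · obtain hJG' | ⟨J', hJ', hJJ'⟩ := hcomm G G' J hG' hJ hne
      · exact ⟨H, 0, n + 1, refl H, head hJG' hH', by omega⟩
      · obtain ⟨K, k, l, hk, hl, hle⟩ := ih hH' hJ'
        exact ⟨K, k, l + 1, hk, head hJJ' hl, by omega⟩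

end NSteps

theorem innermost_commutation
    {α : Type*} (R Ri : α → α → Prop)
    (hsub : ∀ x y, Ri x y → R x y)
    (hcomm : ∀ G H J, R G H → Ri G J → H ≠ J →
      R J H ∨ ∃ K, Ri H K ∧ R J K) :
    ∀ (n m : ℕ) (G H J : α), NSteps R n G H → NSteps Ri m G J →
      ∃ (K : α) (k l : ℕ), NSteps Ri k H K ∧ NSteps R l J K ∧ n + k ≤ m + l := by
  intro n m
  induction m generalizing n with
  | zero =>
    intro G H J hH hJ
    obtain rfl := hJ.eq_of_zero
    exact ⟨H, 0, n, NSteps.refl H, hH, by omega⟩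
  | succ m ih =>
    intro G H J hH hJ
    obtain ⟨G', hG', hJ'⟩ := hJ.exists_head
    obtain ⟨H', k, l, hk, hl, hle⟩ := NSteps.strip hcomm hH hG'
    obtain ⟨K, k', l', hk', hl', hle'⟩ := ih l G' H' J hl hJ'
    exact ⟨K, k + k', l', hk.trans hk', hl', by omega⟩
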